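/- Let p_z be a positive, twice continuously differentiable probability density on ℝ^d with sub-Gaussian tails, fix t > 0, and define the posterior density of z given z' by π_{z'}(z) = φ_t(z'|z) p_z(z) / p_t^{LD}(z') with posterior mean m(z') = ∫ z π_{z'}(z) dz and posterior covariance Cov(z|z') = ∫ (z − m(z'))(z − m(z'))ᵀ π_{z'}(z) dz. Suppose the latent score z' ↦ ∇ log p_t^{LD}(z') is β-Lipschitz. Then for every z' ∈ ℝ^d, the operator norm satisfies ‖Cov(z|z')‖_op ≤ (h²(t)/α²(t)) · (β + 1/h(t)). -/

import Mathlib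

/-!
The Hessian of `log p_t` at `z'` is `-(1/h) I + (α²/h²) Cov(z|z')`, and a `β`-Lipschitz score
bounds it above by `β I`; solving for the covariance gives the claim.

The identity is used one direction `v` at a time. Expanding the square in the Gaussian kernel gives
`φ_t(z' + s v | z) = e^{-s²‖v‖²/(2h) - s⟨v, z'⟩/h} e^{s(α/h)⟨v, z⟩} φ_t(z' | z)` (`phiT_add_smul`),
so `s ↦ log p_t(z' + s v)` is an explicit quadratic plus the cumulant generating function of
`z ↦ ⟨v, z⟩` under the posterior, evaluated at `s α/h` (`log_ptLD_add_smul`). All exponential moments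
are finite, since they are values of `p_t` up to constants, so the second derivative of the cumulant
generating function at `0` is the posterior variance of `⟨v, z⟩`. As `p_t` is differentiable
(`differentiableAt_ptLD`), the first derivative of `s ↦ log p_t(z' + s v)` is `⟨∇ log p_t, v⟩`, and
comparing the derivative of the latter at `s = 0` with the Lipschitz constant bounds the variance
(`variance_postMeas_le`).

The quadratic form of the covariance matrix at `v` is that variance (`inner_postCov`), and the norm
of a symmetric operator is the supremum of its absolute Rayleigh quotients.
-/

open MeasureTheory Real Matrix

/-- `h(t) = 1 - e^{-t}`. -/
noncomputable def hfun (t : ℝ) : ℝ := 1 - Real.exp (-t)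

/-- `α(t) = e^{-t/2}`. -/
noncomputable def afun (t : ℝ) : ℝ := Real.exp (-t / 2)

/-- Gaussian transition density `φ_t(z'|z)` with mean `α(t) z` and covariance `h(t) I_d`. -/
noncomputable def phiT {d : ℕ} (t : ℝ) (z' z : EuclideanSpace ℝ (Fin d)) : ℝ :=
  (2 * Real.pi * hfun t) ^ (-(d : ℝ) / 2) *
    Real.exp (-‖z' - afun t • z‖ ^ 2 / (2 * hfun t))

/-- Noised latent density `p_t^{LD}(z') = ∫ φ_t(z'|z) p_z(z) dz`. -/
noncomputable def ptLD {d : ℕ} (pz : EuclideanSpace ℝ (Fin d) → ℝ) (t : ℝ)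
    (z' : EuclideanSpace ℝ (Fin d)) : ℝ :=
  ∫ z, phiT t z' z * pz z

/-- Posterior density of `z` given `z'`. -/
noncomputable def postDens {d : ℕ} (pz : EuclideanSpace ℝ (Fin d) → ℝ) (t : ℝ)
    (z' z : EuclideanSpace ℝ (Fin d)) : ℝ :=
  phiT t z' z * pz z / ptLD pz t z'

/-- Posterior mean `m(z') = ∫ z π_{z'}(z) dz`. -/
noncomputable def postMean {d : ℕ} (pz : EuclideanSpace ℝ (Fin d) → ℝ) (t : ℝ)
    (z' : EuclideanSpace ℝ (Fin d)) : EuclideanSpace ℝ (Fin d) :=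
  ∫ z, postDens pz t z' z • z

/-- Posterior covariance `Cov(z|z')` as a `d × d` matrix. -/
noncomputable def postCov {d : ℕ} (pz : EuclideanSpace ℝ (Fin d) → ℝ) (t : ℝ)
    (z' : EuclideanSpace ℝ (Fin d)) : Matrix (Fin d) (Fin d) ℝ :=
  Matrix.of fun i j => ∫ z, (z i - postMean pz t z' i) * (z j - postMean pz t z' j) *
    postDens pz t z' z

open ProbabilityTheory

section Aux

variable {d : ℕ} {pz : EuclideanSpace ℝ (Fin d) → ℝ} {t : ℝ}

/-! ### The Gaussian kernel and the noised density -/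

lemma hfun_pos (ht : 0 < t) : 0 < hfun t := by
  unfold hfun
  linarith [Real.exp_lt_one_iff.mpr (neg_lt_zero.mpr ht)]

lemma afun_pos : 0 < afun t := Real.exp_pos _

lemma phiT_pos (ht : 0 < t) (w z : EuclideanSpace ℝ (Fin d)) : 0 < phiT t w z := by
  have := hfun_pos ht
  unfold phiT
  positivity

lemma phiT_le (ht : 0 < t) (w z : EuclideanSpace ℝ (Fin d)) :
    phiT t w z ≤ (2 * Real.pi * hfun t) ^ (-(d : ℝ) / 2) := by
  have := hfun_pos ht
  unfold phiT
  refine mul_le_of_le_one_right (by positivity) (Real.exp_le_one_iff.mpr ?_)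
  rw [neg_div]
  exact neg_nonpos.mpr (by positivity)

lemma continuous_phiT (w : EuclideanSpace ℝ (Fin d)) : Continuous (phiT t w) := by
  unfold phiT
  fun_prop

lemma integrable_phiT_mul (ht : 0 < t) (hint : Integrable pz)
    (w : EuclideanSpace ℝ (Fin d)) : Integrable fun z => phiT t w z * pz z := by
  refine hint.bdd_mul (c := (2 * Real.pi * hfun t) ^ (-(d : ℝ) / 2))
    (continuous_phiT w).aestronglyMeasurable (ae_of_all _ fun z => ?_)
  rw [Real.norm_of_nonneg (phiT_pos ht w z).le]
  exact phiT_le ht w z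

lemma ptLD_pos (ht : 0 < t) (hpos : ∀ z, 0 < pz z) (hint : Integrable pz)
    (w : EuclideanSpace ℝ (Fin d)) : 0 < ptLD pz t w := by
  refine (integral_pos_iff_support_of_nonneg
    (fun z => (mul_pos (phiT_pos ht w z) (hpos z)).le) (integrable_phiT_mul ht hint w)).2 ?_
  have : Function.support (fun z => phiT t w z * pz z) = Set.univ :=
    Set.eq_univ_of_forall fun z => (mul_pos (phiT_pos ht w z) (hpos z)).ne'
  rw [this]
  exact Measure.measure_univ_pos.2 (NeZero.ne _)

lemma hasFDerivAt_phiT (w z : EuclideanSpace ℝ (Fin d)) :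
    HasFDerivAt (fun w => phiT t w z)
      (-(phiT t w z / hfun t) • innerSL ℝ (w - afun t • z)) w := by
  have h1 : HasFDerivAt (fun w : EuclideanSpace ℝ (Fin d) => ‖w - afun t • z‖ ^ 2)
      (2 • innerSL ℝ (w - afun t • z)) w := by
    simpa using! ((hasFDerivAt_id w).sub_const (afun t • z)).norm_sq
  have h2 := ((h1.neg.mul_const (2 * hfun t)⁻¹).exp).const_mul
    ((2 * Real.pi * hfun t) ^ (-(d : ℝ) / 2))
  refine h2.congr_fderiv ?_
  ext v
  simp [phiT, div_eq_mul_inv]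
  ring

/-- The gradient of the Gaussian kernel in its first variable is bounded uniformly in both
variables, because `x e^{-x²/(2h)}` is bounded. -/
lemma norm_fderiv_phiT_le (ht : 0 < t) (w z : EuclideanSpace ℝ (Fin d)) :
    ‖-(phiT t w z / hfun t) • innerSL ℝ (w - afun t • z)‖ ≤
      (2 * Real.pi * hfun t) ^ (-(d : ℝ) / 2) * (hfun t / 2 + 1) / hfun t := by
  have hh := hfun_pos ht
  rw [norm_smul, norm_neg, innerSL_apply_norm, Real.norm_of_nonneg
    (div_nonneg (phiT_pos ht w z).le hh.le), div_mul_eq_mul_div]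
  unfold phiT
  set x := ‖w - afun t • z‖
  set h := hfun t
  have hy : 0 ≤ x ^ 2 / (2 * h) := by positivity
  -- AM-GM: `x ≤ h/2 + x²/(2h)`
  have h1 : x ≤ h / 2 + x ^ 2 / (2 * h) := by
    rw [← sub_nonneg]
    have : h / 2 + x ^ 2 / (2 * h) - x = (x - h) ^ 2 / (2 * h) := by field_simp; ring
    rw [this]; positivity
  have h2 : x ≤ (h / 2 + 1) * Real.exp (x ^ 2 / (2 * h)) := by
    have := Real.add_one_le_exp (x ^ 2 / (2 * h))
    nlinarith
  have h3 : Real.exp (-x ^ 2 / (2 * h)) * x ≤ h / 2 + 1 := by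
    rw [neg_div, Real.exp_neg, inv_mul_le_iff₀ (Real.exp_pos _)]
    linarith
  rw [mul_assoc]
  gcongr

/-- Differentiation under the integral sign; needed so that `gradient` of `log p_t` is a genuine
gradient rather than the junk value `0`. -/
lemma differentiableAt_ptLD (ht : 0 < t) (hpos : ∀ z, 0 < pz z) (hcont : Continuous pz)
    (hint : Integrable pz) (w : EuclideanSpace ℝ (Fin d)) :
    DifferentiableAt ℝ (ptLD pz t) w := by
  refine (hasFDerivAt_integral_of_dominated_of_fderiv_le (s := Set.univ)
    (F := fun w z => phiT t w z * pz z)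
    (F' := fun w z => pz z • (-(phiT t w z / hfun t) • innerSL ℝ (w - afun t • z)))
    (bound := fun z => (2 * Real.pi * hfun t) ^ (-(d : ℝ) / 2) * (hfun t / 2 + 1) / hfun t * pz z)
    Filter.univ_mem
    (Filter.Eventually.of_forall fun w => (integrable_phiT_mul ht hint w).1)
    (integrable_phiT_mul ht hint w) ?_ ?_ (hint.const_mul _) ?_).differentiableAt
  · have := continuous_phiT (t := t) w
    exact Continuous.aestronglyMeasurable (by fun_prop)
  · refine ae_of_all _ fun z x _ => ?_
    rw [norm_smul, Real.norm_of_nonneg (hpos z).le, mul_comm]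
    exact mul_le_mul_of_nonneg_right (norm_fderiv_phiT_le ht x z) (hpos z).le
  · exact ae_of_all _ fun z x _ => (hasFDerivAt_phiT x z).mul_const (pz z)

/-! ### The posterior law and its exponential moments -/

/-- The posterior law of `z` given `z'`. -/
noncomputable def postMeas (pz : EuclideanSpace ℝ (Fin d) → ℝ) (t : ℝ)
    (z' : EuclideanSpace ℝ (Fin d)) : Measure (EuclideanSpace ℝ (Fin d)) :=
  volume.withDensity fun z => ENNReal.ofReal (postDens pz t z' z)

lemma postDens_nonneg (ht : 0 < t) (hpos : ∀ z, 0 < pz z) (z' z : EuclideanSpace ℝ (Fin d)) :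
    0 ≤ postDens pz t z' z :=
  div_nonneg (mul_pos (phiT_pos ht z' z) (hpos z)).le
    (integral_nonneg fun z => (mul_pos (phiT_pos ht z' z) (hpos z)).le)

lemma measurable_postDens (hcont : Continuous pz) (z' : EuclideanSpace ℝ (Fin d)) :
    Measurable fun z => ENNReal.ofReal (postDens pz t z' z) := by
  have := continuous_phiT (t := t) z'
  unfold postDens
  exact Measurable.ennreal_ofReal (by fun_prop)

lemma integral_postMeas {E : Type*} [NormedAddCommGroup E] [NormedSpace ℝ E] (ht : 0 < t)
    (hpos : ∀ z, 0 < pz z) (hcont : Continuous pz) (z' : EuclideanSpace ℝ (Fin d))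
    (f : EuclideanSpace ℝ (Fin d) → E) :
    ∫ z, f z ∂(postMeas pz t z') = ∫ z, postDens pz t z' z • f z := by
  unfold postMeas
  rw [integral_withDensity_eq_integral_toReal_smul (measurable_postDens hcont z')
    (ae_of_all _ fun _ => ENNReal.ofReal_lt_top)]
  simp_rw [ENNReal.toReal_ofReal (postDens_nonneg ht hpos z' _)]

lemma integrable_postMeas_iff (ht : 0 < t)
    (hpos : ∀ z, 0 < pz z) (hcont : Continuous pz) (z' : EuclideanSpace ℝ (Fin d))
    (f : EuclideanSpace ℝ (Fin d) → ℝ) :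
    Integrable f (postMeas pz t z') ↔ Integrable fun z => f z * postDens pz t z' z := by
  unfold postMeas
  rw [integrable_withDensity_iff (measurable_postDens hcont z')
    (ae_of_all _ fun _ => ENNReal.ofReal_lt_top)]
  simp_rw [ENNReal.toReal_ofReal (postDens_nonneg ht hpos z' _)]

lemma isProbabilityMeasure_postMeas (ht : 0 < t) (hpos : ∀ z, 0 < pz z)
    (hint : Integrable pz) (z' : EuclideanSpace ℝ (Fin d)) :
    IsProbabilityMeasure (postMeas pz t z') := by
  constructor
  unfold postMeas postDens
  rw [withDensity_apply _ MeasurableSet.univ, Measure.restrict_univ,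
    ← ofReal_integral_eq_lintegral_ofReal
      ((integrable_phiT_mul ht hint z').div_const _)
      (ae_of_all _ fun z => postDens_nonneg ht hpos z' z), integral_div]
  change ENNReal.ofReal (ptLD pz t z' / ptLD pz t z') = 1
  rw [div_self (ptLD_pos ht hpos hint z').ne', ENNReal.ofReal_one]

/-- Translating the noised point tilts the Gaussian kernel exponentially in `z`. -/
lemma phiT_add_smul (ht : 0 < t) (z' v z : EuclideanSpace ℝ (Fin d)) (s : ℝ) :
    phiT t (z' + s • v) z =
      Real.exp (-(s ^ 2 * ‖v‖ ^ 2 / (2 * hfun t)) - s * inner ℝ v z' / hfun t) *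
        (Real.exp (s * (afun t / hfun t) * inner ℝ v z) * phiT t z' z) := by
  have hh := (hfun_pos ht).ne'
  unfold phiT
  rw [mul_left_comm (Real.exp (s * _ * _)), mul_left_comm (Real.exp (_ - _)), ← Real.exp_add,
    ← Real.exp_add]
  congr 2
  have : z' + s • v - afun t • z = (z' - afun t • z) + s • v := by abel
  rw [this, norm_add_sq_real, norm_smul, inner_smul_right, inner_sub_left, inner_smul_left,
    real_inner_comm v z', real_inner_comm v z, Real.norm_eq_abs, mul_pow, sq_abs]
  simp
  field_simp
  ring

/-- Every linear functional has all exponential moments under the posterior: tilting the posterior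
by `e^{r⟨v, z⟩}` amounts to moving the noised point, where the joint density is again
integrable. -/
lemma integrable_exp_postMeas (ht : 0 < t) (hpos : ∀ z, 0 < pz z) (hcont : Continuous pz)
    (hint : Integrable pz) (z' v : EuclideanSpace ℝ (Fin d)) (r : ℝ) :
    Integrable (fun z => Real.exp (r * inner ℝ v z)) (postMeas pz t z') := by
  rw [integrable_postMeas_iff ht hpos hcont]
  have ha := (afun_pos (t := t)).ne'
  have hh : hfun t ≠ 0 := ne_of_gt (hfun_pos ht)
  -- `r = s * (α / h)` for `s = r * h / α`, so the integrand is a multiple of the joint density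
  -- at the translated point `z' + s • v`.
  obtain ⟨s, rfl⟩ : ∃ s, r = s * (afun t / hfun t) := ⟨r * (hfun t / afun t), by field_simp⟩
  have h := (integrable_phiT_mul ht hint (z' + s • v)).const_mul
    ((Real.exp (-(s ^ 2 * ‖v‖ ^ 2 / (2 * hfun t)) - s * inner ℝ v z' / hfun t))⁻¹ /
      ptLD pz t z')
  refine h.congr (ae_of_all _ fun z => ?_)
  simp only
  rw [phiT_add_smul ht, postDens]
  have := (Real.exp_pos (-(s ^ 2 * ‖v‖ ^ 2 / (2 * hfun t)) - s * inner ℝ v z' / hfun t)).ne'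
  field_simp

lemma mem_interior_integrableExpSet (ht : 0 < t) (hpos : ∀ z, 0 < pz z) (hcont : Continuous pz)
    (hint : Integrable pz) (z' v : EuclideanSpace ℝ (Fin d)) (r : ℝ) :
    r ∈ interior (integrableExpSet (fun z => inner ℝ v z) (postMeas pz t z')) := by
  have : integrableExpSet (fun z => inner ℝ v z) (postMeas pz t z') = Set.univ :=
    Set.eq_univ_of_forall fun r => integrable_exp_postMeas ht hpos hcont hint z' v r
  simp [this]

/-! ### The score along a line and the posterior variance -/

/-- Along a line, `log p_t` is a quadratic plus the cumulant generating function of the linear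
functional `⟨v, ·⟩` under the posterior. -/
lemma log_ptLD_add_smul (ht : 0 < t) (hpos : ∀ z, 0 < pz z) (hcont : Continuous pz)
    (hint : Integrable pz) (z' v : EuclideanSpace ℝ (Fin d)) (s : ℝ) :
    Real.log (ptLD pz t (z' + s • v)) =
      Real.log (ptLD pz t z') - s ^ 2 * ‖v‖ ^ 2 / (2 * hfun t) - s * inner ℝ v z' / hfun t +
        cgf (fun z => inner ℝ v z) (postMeas pz t z') (s * (afun t / hfun t)) := by
  have hp := ptLD_pos ht hpos hint z'
  have := isProbabilityMeasure_postMeas ht hpos hint z'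
  have hm : 0 < mgf (fun z => inner ℝ v z) (postMeas pz t z') (s * (afun t / hfun t)) :=
    mgf_pos (integrable_exp_postMeas ht hpos hcont hint z' v _)
  have key : ptLD pz t (z' + s • v) =
      Real.exp (-(s ^ 2 * ‖v‖ ^ 2 / (2 * hfun t)) - s * inner ℝ v z' / hfun t) *
        (ptLD pz t z' *
          mgf (fun z => inner ℝ v z) (postMeas pz t z') (s * (afun t / hfun t))) := by
    rw [mgf, integral_postMeas ht hpos hcont, ← integral_const_mul, ← integral_const_mul, ptLD]
    congr 1 with z
    rw [phiT_add_smul ht, postDens, smul_eq_mul]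
    field_simp
  rw [key, Real.log_mul (Real.exp_pos _).ne' (by positivity), Real.log_exp,
    Real.log_mul hp.ne' hm.ne', cgf]
  ring

/-- Directional form of the score identity, from differentiating `log_ptLD_add_smul` in `s`. -/
lemma inner_gradient_log_ptLD (ht : 0 < t) (hpos : ∀ z, 0 < pz z) (hcont : Continuous pz)
    (hint : Integrable pz) (z' v : EuclideanSpace ℝ (Fin d)) (s : ℝ) :
    inner ℝ (gradient (fun w => Real.log (ptLD pz t w)) (z' + s • v)) v =
      -(s * ‖v‖ ^ 2 / hfun t) - inner ℝ v z' / hfun t +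
        deriv (cgf (fun z => inner ℝ v z) (postMeas pz t z')) (s * (afun t / hfun t)) *
          (afun t / hfun t) := by
  have hh := (hfun_pos ht).ne'
  have hd : DifferentiableAt ℝ (fun w => Real.log (ptLD pz t w)) (z' + s • v) :=
    (differentiableAt_ptLD ht hpos hcont hint _).log (ptLD_pos ht hpos hint _).ne'
  have hline : HasDerivAt (fun s : ℝ => z' + s • v) v s := by
    simpa using ((hasDerivAt_id s).smul_const v).const_add z'
  have h1 := hd.hasGradientAt.hasFDerivAt.comp_hasDerivAt s hline
  have hc : HasDerivAt (cgf (fun z => inner ℝ v z) (postMeas pz t z'))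
      (deriv (cgf (fun z => inner ℝ v z) (postMeas pz t z')) (s * (afun t / hfun t)))
      (s * (afun t / hfun t)) :=
    (analyticAt_cgf
      (mem_interior_integrableExpSet ht hpos hcont hint z' v _)).differentiableAt.hasDerivAt
  have h2 := ((((hasDerivAt_pow 2 s).mul_const (‖v‖ ^ 2)).div_const (2 * hfun t)).const_sub
    (Real.log (ptLD pz t z'))).sub (((hasDerivAt_id s).mul_const (inner ℝ v z')).div_const (hfun t))
  have h3 := h2.add (hc.comp s ((hasDerivAt_id s).mul_const (afun t / hfun t)))
  have h4 := h1.unique (h3.congr_of_eventuallyEq (Filter.Eventually.of_forall fun s =>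
    log_ptLD_add_smul ht hpos hcont hint z' v s))
  simp only [InnerProductSpace.toDual_apply_apply] at h4
  rw [h4]
  simp
  field_simp

/-- Directional form of the bound. The derivative at `s = 0` of `⟨∇ log p_t(z' + s v), v⟩` equals
`-‖v‖²/h + (α/h)² Var⟨v, z⟩`, and is at most `β‖v‖²` by the Lipschitz hypothesis. -/
lemma variance_postMeas_le (ht : 0 < t) (hpos : ∀ z, 0 < pz z) (hcont : Continuous pz)
    (hint : Integrable pz) {β : ℝ}
    (hlip : ∀ z₁' z₂' : EuclideanSpace ℝ (Fin d),
      ‖gradient (fun w => Real.log (ptLD pz t w)) z₁' -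
          gradient (fun w => Real.log (ptLD pz t w)) z₂'‖ ≤ β * ‖z₁' - z₂'‖)
    (z' v : EuclideanSpace ℝ (Fin d)) :
    Var[fun z => inner ℝ v z; postMeas pz t z'] ≤
      hfun t ^ 2 / afun t ^ 2 * (β + 1 / hfun t) * ‖v‖ ^ 2 := by
  have hh := hfun_pos ht
  have ha := afun_pos (t := t)
  have := isProbabilityMeasure_postMeas ht hpos hint z'
  have hmem := mem_interior_integrableExpSet ht hpos hcont hint z' v
  set X : EuclideanSpace ℝ (Fin d) → ℝ := fun z => inner ℝ v z
  set μ := postMeas pz t z'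
  have hvar : iteratedDeriv 2 (cgf X μ) 0 = Var[X; μ] := by
    rw [iteratedDeriv_two_cgf_eq_integral (hmem 0), deriv_cgf_zero (hmem 0),
      variance_eq_integral (aemeasurable_of_mem_interior_integrableExpSet (hmem 0))]
    simp
  have hd2 : HasDerivAt (deriv (cgf X μ)) (Var[X; μ]) (0 * (afun t / hfun t)) := by
    rw [← hvar, iteratedDeriv_succ, iteratedDeriv_one, zero_mul]
    exact (analyticAt_cgf (hmem 0)).deriv.differentiableAt.hasDerivAt
  have hg : HasDerivAt
      (fun s : ℝ => inner ℝ (gradient (fun w => Real.log (ptLD pz t w)) (z' + s • v)) v)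
      (-(‖v‖ ^ 2 / hfun t) + Var[X; μ] * (afun t / hfun t) ^ 2) 0 := by
    have h1 := ((((hasDerivAt_id (0 : ℝ)).mul_const (‖v‖ ^ 2)).div_const (hfun t)).neg.sub_const
      (inner ℝ v z' / hfun t)).add
      ((hd2.comp 0 ((hasDerivAt_id (0 : ℝ)).mul_const (afun t / hfun t))).mul_const
        (afun t / hfun t))
    refine (h1.congr_of_eventuallyEq (Filter.Eventually.of_forall fun s => ?_)).congr_deriv ?_
    · exact inner_gradient_log_ptLD ht hpos hcont hint z' v s
    · ring
  have hC : 0 ≤ β * ‖v‖ ^ 2 := by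
    have h0 : 0 ≤ β * ‖v‖ := by simpa using (norm_nonneg _).trans (hlip v 0)
    rw [sq, ← mul_assoc]
    exact mul_nonneg h0 (norm_nonneg _)
  have hle := hg.hasFDerivAt.le_of_lip' (C := β * ‖v‖ ^ 2) hC ?_
  · have h5 : Var[X; μ] * (afun t / hfun t) ^ 2 ≤ (β + 1 / hfun t) * ‖v‖ ^ 2 := by
      rw [ContinuousLinearMap.norm_toSpanSingleton] at hle
      have := (le_abs_self _).trans hle
      rw [add_mul, one_div_mul_eq_div]
      linarith
    rw [div_pow, mul_div_assoc', div_le_iff₀ (by positivity)] at h5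
    rw [div_mul_eq_mul_div, div_mul_eq_mul_div, le_div_iff₀ (by positivity)]
    linarith
  · refine Filter.Eventually.of_forall fun s => ?_
    rw [← inner_sub_left]
    refine (norm_inner_le_norm _ _).trans ?_
    have h6 := hlip (z' + s • v) (z' + (0 : ℝ) • v)
    rw [zero_smul, add_zero, add_sub_cancel_left, norm_smul] at h6
    rw [zero_smul, add_zero, sub_zero]
    nlinarith [mul_le_mul_of_nonneg_right h6 (norm_nonneg v)]

/-! ### The covariance matrix as a quadratic form -/

lemma inner_postCov (ht : 0 < t) (hpos : ∀ z, 0 < pz z) (hcont : Continuous pz)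
    (hint : Integrable pz) (z' v : EuclideanSpace ℝ (Fin d)) :
    inner ℝ (Matrix.toEuclideanCLM (𝕜 := ℝ) (postCov pz t z') v) v =
      Var[fun z => inner ℝ v z; postMeas pz t z'] := by
  have := isProbabilityMeasure_postMeas ht hpos hint z'
  have hL (v : EuclideanSpace ℝ (Fin d)) : MemLp (fun z => inner ℝ v z) 2 (postMeas pz t z') :=
    memLp_of_mem_interior_integrableExpSet
      (mem_interior_integrableExpSet ht hpos hcont hint z' v 0) 2
  have hLi (i : Fin d) : MemLp (fun z : EuclideanSpace ℝ (Fin d) => z i) 2 (postMeas pz t z') := by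
    simpa [EuclideanSpace.inner_single_left] using hL (EuclideanSpace.single i 1)
  have hid : Integrable (fun z => postDens pz t z' z • z) := by
    refine integrable_piLp_iff.2 fun i => ?_
    have := (integrable_postMeas_iff ht hpos hcont z' _).1 ((hLi i).integrable one_le_two)
    simpa [mul_comm] using this
  have hmean (i : Fin d) : postMean pz t z' i = ∫ z, z i ∂(postMeas pz t z') := by
    rw [integral_postMeas ht hpos hcont, postMean]
    exact ((EuclideanSpace.proj (𝕜 := ℝ) i).integral_comp_comm hid).symm
  have hcov (i j : Fin d) : postCov pz t z' i j =
      cov[fun z : EuclideanSpace ℝ (Fin d) => z i, fun z => z j; postMeas pz t z'] := by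
    rw [covariance, integral_postMeas ht hpos hcont, ← hmean, ← hmean, postCov, Matrix.of_apply]
    congr 1 with z
    rw [smul_eq_mul, mul_comm]
  have hX : (fun z : EuclideanSpace ℝ (Fin d) => inner ℝ v z) = fun z => ∑ i, v i * z i := by
    ext z
    simp [PiLp.inner_apply, mul_comm]
  rw [hX, ← covariance_self (by fun_prop), covariance_fun_sum_fun_sum
    (fun i => (hLi i).const_mul (v i)) (fun i => (hLi i).const_mul (v i))]
  simp_rw [covariance_const_mul_left, covariance_const_mul_right, ← hcov]
  rw [real_inner_comm, inner_toEuclideanCLM]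
  simp only [Matrix.mulVec, dotProduct, Finset.mul_sum]
  refine Finset.sum_congr rfl fun i _ => Finset.sum_congr rfl fun j _ => ?_
  ring

lemma postCov_isSymmetric (z' : EuclideanSpace ℝ (Fin d)) :
    (Matrix.toEuclideanCLM (𝕜 := ℝ) (postCov pz t z')).IsSymmetric := by
  have h : (postCov pz t z').IsHermitian := by
    ext i j
    simp [postCov, mul_comm (_ - postMean pz t z' i)]
  exact Matrix.isSymmetric_toEuclideanLin_iff.2 h

end Aux

/-- operator-norm bound on the conditional covariance.
If the latent score `∇ log p_t^{LD}` is `β`-Lipschitz, then for every `z'`,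
`‖Cov(z|z')‖_op ≤ (h(t)²/α(t)²) (β + 1/h(t))`. -/
theorem conditional_covariance_bound
    (d : ℕ) (pz : EuclideanSpace ℝ (Fin d) → ℝ)
    (hpos : ∀ z, 0 < pz z)
    (hsmooth : ContDiff ℝ 2 pz)
    (hprob : ∫ z, pz z = 1)
    (B C₁ C₂ : ℝ) (hB : 0 < B) (hC₁ : 0 < C₁) (hC₂ : 0 < C₂)
    (htail : ∀ z : EuclideanSpace ℝ (Fin d), B ≤ ‖z‖ →
      pz z ≤ (2 * π) ^ (-(d : ℝ) / 2) * C₁ * Real.exp (-C₂ * ‖z‖ ^ 2 / 2))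
    (t : ℝ) (ht : 0 < t)
    (β : ℝ) (hβ : 0 < β)
    (hlip : ∀ z₁' z₂' : EuclideanSpace ℝ (Fin d),
      ‖gradient (fun w => Real.log (ptLD pz t w)) z₁' -
          gradient (fun w => Real.log (ptLD pz t w)) z₂'‖ ≤ β * ‖z₁' - z₂'‖) :
    ∀ z' : EuclideanSpace ℝ (Fin d),
      ‖Matrix.toEuclideanCLM (𝕜 := ℝ) (postCov pz t z')‖ ≤
        hfun t ^ 2 / afun t ^ 2 * (β + 1 / hfun t) := by
  intro z'
  have hint : Integrable pz := .of_integral_ne_zero (by rw [hprob]; exact one_ne_zero)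
  have hcont := hsmooth.continuous
  have hh := hfun_pos ht
  have ha := afun_pos (t := t)
  rw [ContinuousLinearMap.norm_eq_iSup_rayleighQuotient _ (postCov_isSymmetric z')]
  refine ciSup_le fun v => ?_
  rw [ContinuousLinearMap.rayleighQuotient, ContinuousLinearMap.reApplyInnerSelf_apply,
    inner_postCov ht hpos hcont hint, RCLike.re_to_real,
    abs_of_nonneg (div_nonneg (variance_nonneg _ _) (sq_nonneg _))]
  exact div_le_of_le_mul₀ (sq_nonneg _) (by positivity)
    (variance_postMeas_le ht hpos hcont hint hlip z' v)
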